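/- arXiv:1704.00651 — 5 statements merged into one kernel-verified Lean document; each statement's English description precedes it below -/
import Mathlib

section
/- Let n ≥ t ≥ 0 be natural numbers, N = 2^n, R = 2^t, and let A ⊆ {0,1,...,N−1} be domination contiguous. Then for every i with 0 ≤ i < N/R, the block restriction Ã_i = {r ∈ {0,1,...,R−1} : i·R + r ∈ A} is domination contiguous (as a subset of {0,1,...,R−1}). -/
/-!
Adding `i * 2 ^ t` to a remainder `r < 2 ^ t` leaves the low `t` binary digits equal to those of `r`
and puts the digits of `i` above them. Hence `r ↦ i * 2 ^ t + r` preserves domination between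
remainders (`Dom.block_add`), and a remainder squeezed between two members of the block restriction
is sent to a number squeezed between two members of `A`. A number dominated by a remainder is itself
a remainder, since domination implies the usual order (`Dom.le`).
-/

/-- `i` binary-dominates `j`: every binary digit of `j` is at most that of `i`. -/
def Dom (i j : ℕ) : Prop := ∀ k, Nat.testBit j k = true → Nat.testBit i k = true

/-- A set of naturals is domination contiguous. -/
def DomContiguous (S : Set ℕ) : Prop :=
  ∀ h ∈ S, ∀ j ∈ S, ∀ i : ℕ, Dom h i → Dom i j → i ∈ S

theorem Dom.le {h r : ℕ} (hr : Dom h r) : r ≤ h :=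
  Nat.le_of_testBit hr

theorem Dom.block_add {t h r : ℕ} (i : ℕ) (hh : h < 2 ^ t) (hr : r < 2 ^ t) (hd : Dom h r) :
    Dom (i * 2 ^ t + h) (i * 2 ^ t + r) := by
  intro k
  rw [mul_comm i, Nat.testBit_two_pow_mul_add i hr, Nat.testBit_two_pow_mul_add i hh]
  split_ifs
  · exact hd k
  · exact id

theorem block_restriction_domContiguous
    (n t : ℕ) (htn : t ≤ n)
    (A : Set ℕ) (hA : A ⊆ Set.Iio (2 ^ n)) (hdc : DomContiguous A)
    (i : ℕ) (hi : i < 2 ^ n / 2 ^ t) :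
    DomContiguous {r : ℕ | r < 2 ^ t ∧ i * 2 ^ t + r ∈ A} := by
  rintro h ⟨hh, hhA⟩ j ⟨hj, hjA⟩ r hhr hrj
  have hr : r < 2 ^ t := hhr.le.trans_lt hh
  exact ⟨hr, hdc _ hhA _ hjA _ (hhr.block_add i hh hr) (hrj.block_add i hr hj)⟩
end

section
/- Let z ∈ (0,1) be a real number and let A ⊆ {0,...,15} be closed under taking better BEC bit channels, i.e., whenever j ∈ A and j' ∈ {0,...,15} satisfies Z_{j'}(z) < Z_j(z), then j' ∈ A. Then A is not equal to any of the four sets {10,11,12,13,14,15}, {9,10,11,12,13,14,15}, {6,7,10,11,12,13,14,15}, and {2,3,4,5,6,7,10,11,12,13,14,15}. -/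
/-!
For every `z ∈ (0, 1)` one has `Z₇(z) < Z₁₀(z)` and `Z₉(z) < Z₆(z)`. The first two sets contain `10`
but not `7`, and the last two contain `6` but not `9`, so none of them is closed under taking better
channels.

Both inequalities are polynomial inequalities of degree 16 on `(0, 1)`: written in the Bernstein
form `∑ cₖ zᵏ (1 - z)¹⁶⁻ᵏ`, the differences `Z₁₀ - Z₇` and `Z₆ - Z₉` have only nonnegative
coefficients, not all of them zero.
-/

/-- One polarization step for the BEC erasure probability:
`g true z = z²` (the minus/check transform `p`) and `g false z = 2z − z²` (the plus transform `q`). -/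
noncomputable def gstep (b : Bool) (z : ℝ) : ℝ := if b then z ^ 2 else 2 * z - z ^ 2

/-- The BEC bit-channel erasure probability `Z_j(z)` for `j ∈ {0,...,15}` with binary
digits `b₃b₂b₁b₀` (`b₃` most significant): `Z_j(z) = g_{b₀}(g_{b₁}(g_{b₂}(g_{b₃}(z))))`. -/
noncomputable def Zbec (j : ℕ) (z : ℝ) : ℝ :=
  gstep (Nat.testBit j 0) (gstep (Nat.testBit j 1) (gstep (Nat.testBit j 2)
    (gstep (Nat.testBit j 3) z)))

lemma Zbec_7_lt_10 {z : ℝ} (hz0 : 0 < z) (hz1 : z < 1) : Zbec 7 z < Zbec 10 z := by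
  have hy : 0 < 1 - z := sub_pos.2 hz1
  have expand : Zbec 10 z - Zbec 7 z = z ^ 4 * (1 - z) ^ 2 *
      (8 * (1 - z) ^ 10 + 96 * z ^ 1 * (1 - z) ^ 9 + 520 * z ^ 2 * (1 - z) ^ 8 +
        1680 * z ^ 3 * (1 - z) ^ 7 + 3330 * z ^ 4 * (1 - z) ^ 6 + 4240 * z ^ 5 * (1 - z) ^ 5 +
        3560 * z ^ 6 * (1 - z) ^ 4 + 1936 * z ^ 7 * (1 - z) ^ 3 + 636 * z ^ 8 * (1 - z) ^ 2 +
        112 * z ^ 9 * (1 - z) ^ 1 + 8 * z ^ 10) := by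
    norm_num [Zbec, gstep, Nat.testBit, Nat.shiftRight_eq_div_pow]
    ring
  have pos : 0 < Zbec 10 z - Zbec 7 z := by
    rw [expand]
    positivity
  exact sub_pos.1 pos

lemma Zbec_9_lt_6 {z : ℝ} (hz0 : 0 < z) (hz1 : z < 1) : Zbec 9 z < Zbec 6 z := by
  have hy : 0 < 1 - z := sub_pos.2 hz1
  have expand : Zbec 6 z - Zbec 9 z = z ^ 4 * (1 - z) ^ 4 *
      (16 * (1 - z) ^ 8 + 128 * z ^ 1 * (1 - z) ^ 7 + 448 * z ^ 2 * (1 - z) ^ 6 +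
        944 * z ^ 3 * (1 - z) ^ 5 + 1214 * z ^ 4 * (1 - z) ^ 4 + 944 * z ^ 5 * (1 - z) ^ 3 +
        448 * z ^ 6 * (1 - z) ^ 2 + 128 * z ^ 7 * (1 - z) ^ 1 + 16 * z ^ 8) := by
    norm_num [Zbec, gstep, Nat.testBit, Nat.shiftRight_eq_div_pow]
    ring
  have pos : 0 < Zbec 6 z - Zbec 9 z := by
    rw [expand]
    positivity
  exact sub_pos.1 pos

theorem bec_good_set_ne_four_patterns (z : ℝ) (hz0 : 0 < z) (hz1 : z < 1)
    (A : Set ℕ) (hA : A ⊆ Set.Iio 16)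
    (hclosed : ∀ j ∈ A, ∀ j' < 16, Zbec j' z < Zbec j z → j' ∈ A) :
    A ≠ {10, 11, 12, 13, 14, 15} ∧
    A ≠ {9, 10, 11, 12, 13, 14, 15} ∧
    A ≠ {6, 7, 10, 11, 12, 13, 14, 15} ∧
    A ≠ {2, 3, 4, 5, 6, 7, 10, 11, 12, 13, 14, 15} := by
  have h7 : 10 ∈ A → 7 ∈ A := fun h => hclosed 10 h 7 (by norm_num) (Zbec_7_lt_10 hz0 hz1)
  have h9 : 6 ∈ A → 9 ∈ A := fun h => hclosed 6 h 9 (by norm_num) (Zbec_9_lt_6 hz0 hz1)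
  refine ⟨?_, ?_, ?_, ?_⟩ <;> rintro rfl
  · simp at h7
  · simp at h7
  · simp at h9
  · simp at h9
end

section
/- Let n ≥ 4 and let A ⊆ {0,...,2^n−1} be closed under the Huawei reliability order, i.e., whenever j ∈ A and j' ∈ {0,...,2^n−1} satisfies Q_{j'} > Q_j, then j' ∈ A. Then for every block index i with 0 ≤ i < 2^n/16, the set {m ∈ {0,...,15} : 16·i + m ∈ A} is a prefix set of the sequence Q₀¹⁵ = (15,14,13,11,7,12,10,9,6,5,3,8,4,2,1,0); in particular only 17 distinct within-block patterns can occur. -/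
/-!
Within a block the four lowest bits and the remaining bits contribute separately:
`Q (16 * i + m) = T1 m + c`, where `c` depends on `i` only (`Q_block`). Hence comparing two
elements of a block amounts to comparing `T1`. With `x = 2^{1/4}`, the values of `T1` along
`huaweiSeq` are polynomials in `x`, and they strictly decrease because `1 < x < 6/5`
(`huaweiSeq_pairwise`). The closure hypothesis then says that membership in `A` propagates
leftwards along `huaweiSeq`, so each block pattern is a prefix (`exists_take_of_pairwise`).
-/

/-- The Huawei reliability metric `Q_j = Σ_k j_k · 2^{k/4}`, where `j_k` is the `k`-th
binary digit of `j` (all digits with index `k ≥ j + 1` vanish, so the finite sum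
over `k < j + 1` equals the full sum). -/
noncomputable def Q (j : ℕ) : ℝ :=
  ∑ k ∈ Finset.range (j + 1), if Nat.testBit j k then (2 : ℝ) ^ ((k : ℝ) / 4) else 0

/-- `T₁(m) = Σ_{k=0}^{3} m_k · 2^{k/4}`, the contribution of the lowest four bits. -/
noncomputable def T1 (m : ℕ) : ℝ :=
  ∑ k ∈ Finset.range 4, if Nat.testBit m k then (2 : ℝ) ^ ((k : ℝ) / 4) else 0

/-- The Huawei within-block reliability order on `{0,...,15}`. -/
def huaweiSeq : List ℕ := [15, 14, 13, 11, 7, 12, 10, 9, 6, 5, 3, 8, 4, 2, 1, 0]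

/-- Summing past the last binary digit of `j` does not change the metric. -/
lemma Q_eq_sum_range {j N : ℕ} (h : j + 1 ≤ N) :
    Q j = ∑ k ∈ Finset.range N, if Nat.testBit j k then (2 : ℝ) ^ ((k : ℝ) / 4) else 0 := by
  unfold Q
  apply Finset.sum_subset (Finset.range_mono h)
  intro k _ hk
  have hjk : j < 2 ^ k := lt_of_lt_of_le (by simp at hk; omega) Nat.lt_two_pow_self.le
  simp [Nat.testBit_lt_two_pow hjk]

lemma Q_block (i : ℕ) : ∃ c : ℝ, ∀ m < 16, Q (16 * i + m) = T1 m + c := by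
  -- `4 + (16 * i + 16)` digits suffice for every element of the block
  refine ⟨∑ k ∈ Finset.range (16 * i + 16),
    if Nat.testBit i k then (2 : ℝ) ^ (((4 + k : ℕ) : ℝ) / 4) else 0, fun m hm => ?_⟩
  rw [Q_eq_sum_range (N := 4 + (16 * i + 16)) (by omega), Finset.sum_range_add, T1]
  have bit (k : ℕ) := Nat.testBit_two_pow_mul_add i (i := 4) (b := m) (by omega) k
  norm_num only at bit
  congr 1
  · refine Finset.sum_congr rfl fun k hk => ?_
    rw [bit, if_pos (Finset.mem_range.mp hk)]
  · refine Finset.sum_congr rfl fun k _ => ?_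
    rw [bit, if_neg (by omega : ¬ 4 + k < 4), Nat.add_sub_cancel_left]

/-- `T1` as a polynomial in `x = 2^{1/4}`, with the two bounds on `x` that order its values. -/
lemma T1_poly : ∃ x : ℝ, 1 < x ∧ x < 6 / 5 ∧ ∀ m, T1 m =
    (if Nat.testBit m 0 then 1 else 0) + (if Nat.testBit m 1 then x else 0) +
    (if Nat.testBit m 2 then x ^ 2 else 0) + (if Nat.testBit m 3 then x ^ 3 else 0) := by
  have hpow (k : ℕ) : (2 : ℝ) ^ ((k : ℝ) / 4) = ((2 : ℝ) ^ ((1 : ℝ) / 4)) ^ k := by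
    rw [← Real.rpow_natCast, ← Real.rpow_mul (by norm_num)]
    congr 1
    ring
  refine ⟨(2 : ℝ) ^ ((1 : ℝ) / 4), Real.one_lt_rpow (by norm_num) (by norm_num), ?_, fun m => ?_⟩
  · have h4 : ((2 : ℝ) ^ ((1 : ℝ) / 4)) ^ 4 = 2 := by
      rw [← hpow 4]
      norm_num
    refine lt_of_pow_lt_pow_left₀ 4 (by norm_num) ?_
    rw [h4]
    norm_num
  · simp only [T1, hpow, Finset.sum_range_succ, Finset.sum_range_zero, pow_zero, pow_one, zero_add]

lemma huaweiSeq_pairwise : huaweiSeq.Pairwise (fun a b => T1 b < T1 a) := by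
  obtain ⟨x, h1, h2, hT⟩ := T1_poly
  have h12 : x < x ^ 2 := by nlinarith
  have h23 : x ^ 2 < x ^ 3 := by nlinarith
  -- compares `7` with `12` and `3` with `8`
  have h3 : x ^ 3 < 1 + x := by
    have : x ^ 3 < (6 / 5) ^ 3 := by gcongr
    linarith
  -- `(x - 1) * (x ^ 2 - 1) > 0`, which compares `9` with `6`
  have h9 : x + x ^ 2 < 1 + x ^ 3 := by nlinarith
  have : IsTrans ℕ (fun a b => T1 b < T1 a) := ⟨fun _ _ _ hab hbc => hbc.trans hab⟩
  rw [← List.isChain_iff_pairwise]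
  simp only [huaweiSeq, List.isChain_cons_cons, List.IsChain.singleton, and_true, hT]
  norm_num [Nat.testBit_eq_decide_div_mod_eq]
  split_ands <;> linarith

/-- A predicate that propagates leftwards along a list holds exactly on a prefix of it. -/
lemma exists_take_of_pairwise {α : Type*} (P : α → Prop) (l : List α)
    (h : l.Pairwise (fun a b => P b → P a)) :
    ∃ k ≤ l.length, ∀ m, (m ∈ l ∧ P m) ↔ m ∈ l.take k := by
  induction l with
  | nil => exact ⟨0, le_rfl, by simp⟩
  | cons a l ih =>
    rw [List.pairwise_cons] at h
    obtain ⟨k, hk, hm⟩ := ih h.2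
    by_cases ha : P a
    · refine ⟨k + 1, by simpa using hk, fun m => ?_⟩
      rw [List.take_succ_cons, List.mem_cons, List.mem_cons, ← hm]
      constructor
      · tauto
      · rintro (rfl | hml)
        · exact ⟨Or.inl rfl, ha⟩
        · exact ⟨Or.inr hml.1, hml.2⟩
    · refine ⟨0, Nat.zero_le _, fun m => ?_⟩
      simp only [List.take_zero, List.not_mem_nil, iff_false, List.mem_cons]
      rintro ⟨rfl | hml, hP⟩
      · exact ha hP
      · exact ha (h.1 m hml hP)

lemma mem_huaweiSeq {m : ℕ} : m ∈ huaweiSeq ↔ m < 16 := by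
  simp only [huaweiSeq, List.mem_cons, List.not_mem_nil, or_false]
  omega

theorem huawei_block_patterns_are_prefixes (n : ℕ) (hn : 4 ≤ n)
    (A : Set ℕ) (hA : A ⊆ Set.Iio (2 ^ n))
    (hclosed : ∀ j ∈ A, ∀ j' < 2 ^ n, Q j < Q j' → j' ∈ A) :
    ∀ i < 2 ^ n / 16, ∃ k ≤ 16,
      {m : ℕ | m < 16 ∧ 16 * i + m ∈ A} = {m : ℕ | m ∈ huaweiSeq.take k} := by
  intro i hi
  obtain ⟨c, hc⟩ := Q_block i
  obtain ⟨k, hk, hm⟩ := exists_take_of_pairwise (fun m => 16 * i + m ∈ A) huaweiSeq <| by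
    refine huaweiSeq_pairwise.imp_of_mem fun {a b} ha hb hab hbA => ?_
    rw [mem_huaweiSeq] at ha hb
    refine hclosed _ hbA _ (by omega) ?_
    rw [hc a ha, hc b hb]
    linarith
  refine ⟨k, hk, Set.ext fun m => ?_⟩
  simpa only [mem_huaweiSeq, Set.mem_ofPred_eq] using hm m
end

section
/- For every natural number n and every j ∈ {0,...,2^n−1}, the Hamming weight of the j-th row of F^{⊗n} equals 2^{w(j)}, where w(j) is the number of ones in the binary representation of j. -/
/-!
The proof is by induction on `n` along the block recursion `[[A, 0], [A, A]]` with `A = F^{⊗n}`.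
A row in the upper half is a row of `A` padded with zeros, and its index keeps the same binary
digits, so neither side changes. A row `2 ^ n + a` in the lower half is row `a` of `A` repeated
twice, which doubles the weight, while its index gains a leading one
(`digits_two_sum_two_pow_add`), which doubles `2 ^ w`.
-/

/-- The canonical identification of `Fin (2^n) ⊕ Fin (2^n)` with `Fin (2^(n+1))`
(lower half, then upper half). -/
def sumEquiv (n : ℕ) : Fin (2 ^ n) ⊕ Fin (2 ^ n) ≃ Fin (2 ^ (n + 1)) :=
  finSumFinEquiv.trans (finCongr (by ring))

/-- The `n`-fold Kronecker power `F^{⊗n}` of `F = [[1,0],[1,1]]` over `GF(2)`,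
built via the block recursion `F^{⊗(n+1)} = [[F^{⊗n}, 0], [F^{⊗n}, F^{⊗n}]]`,
with `F^{⊗0} = [1]`. -/
def Fpow : (n : ℕ) → Matrix (Fin (2 ^ n)) (Fin (2 ^ n)) (ZMod 2)
  | 0 => 1
  | n + 1 =>
    Matrix.reindex (sumEquiv n) (sumEquiv n)
      (Matrix.fromBlocks (Fpow n) 0 (Fpow n) (Fpow n))

theorem digits_two_sum_rec (m : ℕ) :
    (Nat.digits 2 m).sum = m % 2 + (Nat.digits 2 (m / 2)).sum := by
  rcases Nat.eq_zero_or_pos m with rfl | h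
  · simp
  · rw [Nat.digits_def' (by norm_num) h, List.sum_cons]

/-- Setting a new leading bit of `a < 2 ^ n` adds one to the binary digit sum. -/
theorem digits_two_sum_two_pow_add (n a : ℕ) (ha : a < 2 ^ n) :
    (Nat.digits 2 (2 ^ n + a)).sum = (Nat.digits 2 a).sum + 1 := by
  induction n generalizing a with
  | zero =>
    obtain rfl : a = 0 := by simpa using ha
    simp
  | succ n ih =>
    have hdiv : (2 ^ (n + 1) + a) / 2 = 2 ^ n + a / 2 := by rw [pow_succ]; omega
    have hmod : (2 ^ (n + 1) + a) % 2 = a % 2 := by rw [pow_succ]; omega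
    rw [digits_two_sum_rec, hdiv, hmod, ih (a / 2) (by rw [pow_succ] at ha; omega),
      digits_two_sum_rec a]
    omega

/-- The weight of a row of `F^{⊗(n+1)}`, split over the left and right column blocks. -/
theorem card_Fpow_succ_row (n : ℕ) (s : Fin (2 ^ n) ⊕ Fin (2 ^ n)) :
    (Finset.univ.filter fun i => Fpow (n + 1) (sumEquiv n s) i ≠ 0).card
      = (Finset.univ.filter fun i =>
          Matrix.fromBlocks (Fpow n) 0 (Fpow n) (Fpow n) s (Sum.inl i) ≠ 0).card
        + (Finset.univ.filter fun i =>
          Matrix.fromBlocks (Fpow n) 0 (Fpow n) (Fpow n) s (Sum.inr i) ≠ 0).card := by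
  simp only [Finset.card_filter]
  rw [← Equiv.sum_comp (sumEquiv n), Fintype.sum_sum_type]
  simp only [Fpow, Matrix.reindex_apply, Matrix.submatrix_apply, Equiv.symm_apply_apply]

theorem Fpow_row_hammingWeight (n : ℕ) (j : Fin (2 ^ n)) :
    (Finset.univ.filter fun i => Fpow n j i ≠ 0).card
      = 2 ^ (Nat.digits 2 (j : ℕ)).sum := by
  induction n with
  | zero =>
    obtain rfl : j = 0 := Subsingleton.elim (α := Fin 1) j 0
    decide
  | succ n ih =>
    obtain ⟨s, rfl⟩ := (sumEquiv n).surjective j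
    rw [card_Fpow_succ_row]
    rcases s with a | a
    · have hval : (sumEquiv n (Sum.inl a) : ℕ) = a := by simp [sumEquiv]
      rw [hval, ← ih a]
      simp only [Matrix.fromBlocks_apply₁₁, Matrix.fromBlocks_apply₁₂, Matrix.zero_apply, ne_eq,
        not_true_eq_false, Finset.filter_false, Finset.card_empty, add_zero]
      -- The two sides still differ in the `Decidable` instances of the filter.
      congr!
    · have hval : (sumEquiv n (Sum.inr a) : ℕ) = 2 ^ n + a := by
        simp [sumEquiv, add_comm]
      rw [hval, digits_two_sum_two_pow_add n a a.isLt, pow_succ, ← ih a, mul_two]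
      simp only [Matrix.fromBlocks_apply₂₁, Matrix.fromBlocks_apply₂₂]
      congr!
end

section
/- Bit-permutation matrices commute with the polar transform: for every natural number n and every permutation σ of {0,...,n−1}, let P be the 2^n × 2^n permutation matrix over GF(2) whose j-th column is the standard basis vector e_{π_σ(j)}. Then P · F^{⊗n} = F^{⊗n} · P. -/
/-- The bit permutation `π_σ` on `{0,...,2^n−1}` associated with a permutation `σ`
of the bit positions `{0,...,n−1}`: the `k`-th binary digit of `bitPerm n σ j`
is the `σ(k)`-th binary digit of `j`. -/
def bitPerm (n : ℕ) (σ : Equiv.Perm (Fin n)) (j : ℕ) : ℕ :=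
  ∑ k : Fin n, if Nat.testBit j (σ k : ℕ) then 2 ^ (k : ℕ) else 0

/-- The `2^n × 2^n` permutation matrix over `GF(2)` whose `j`-th column is the
standard basis vector `e_{π_σ(j)}`. -/
def permMatrix (n : ℕ) (σ : Equiv.Perm (Fin n)) :
    Matrix (Fin (2 ^ n)) (Fin (2 ^ n)) (ZMod 2) :=
  Matrix.of fun i j => if (i : ℕ) = bitPerm n σ (j : ℕ) then 1 else 0

theorem sum_bits_eq_ofBits (n : ℕ) (f : Fin n → Bool) :
    (∑ k : Fin n, if f k then 2 ^ (k : ℕ) else 0) = Nat.ofBits f := by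
  induction n with
  | zero => simp
  | succ n ih =>
    rw [Nat.ofBits_succ, ← ih, Fin.sum_univ_succ, Finset.mul_sum, add_comm]
    congr 1
    · refine Finset.sum_congr rfl fun k _ => ?_
      simp only [Function.comp, mul_ite, mul_zero, Fin.val_succ, pow_succ']
    · cases f 0 <;> simp

theorem bitPerm_eq_ofBits (n : ℕ) (σ : Equiv.Perm (Fin n)) (j : ℕ) :
    bitPerm n σ j = Nat.ofBits fun k : Fin n => j.testBit (σ k) :=
  sum_bits_eq_ofBits n _

theorem testBit_bitPerm (n : ℕ) (σ : Equiv.Perm (Fin n)) (j : ℕ) (k : Fin n) :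
    (bitPerm n σ j).testBit k = j.testBit (σ k) := by
  rw [bitPerm_eq_ofBits, Nat.testBit_ofBits_lt _ _ k.isLt]

theorem bitPerm_lt (n : ℕ) (σ : Equiv.Perm (Fin n)) (j : ℕ) : bitPerm n σ j < 2 ^ n := by
  rw [bitPerm_eq_ofBits]
  exact Nat.ofBits_lt_two_pow _

theorem eq_of_testBit_fin {n a b : ℕ} (ha : a < 2 ^ n) (hb : b < 2 ^ n)
    (h : ∀ k : Fin n, a.testBit k = b.testBit k) : a = b := by
  refine Nat.eq_of_testBit_eq fun k => ?_
  rcases lt_or_ge k n with hk | hk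
  · exact h ⟨k, hk⟩
  · have hp : 2 ^ n ≤ 2 ^ k := Nat.pow_le_pow_right (by norm_num) hk
    rw [Nat.testBit_lt_two_pow (ha.trans_le hp), Nat.testBit_lt_two_pow (hb.trans_le hp)]

/-- The bit permutation `π_σ` as a bijection of `Fin (2 ^ n)`; its inverse is `π_{σ⁻¹}`. -/
def bitPermEquiv (n : ℕ) (σ : Equiv.Perm (Fin n)) : Equiv.Perm (Fin (2 ^ n)) where
  toFun j := ⟨bitPerm n σ j, bitPerm_lt n σ j⟩
  invFun j := ⟨bitPerm n σ.symm j, bitPerm_lt n σ.symm j⟩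
  left_inv j := Fin.ext <| eq_of_testBit_fin (bitPerm_lt _ _ _) j.isLt fun k => by
    simp [testBit_bitPerm]
  right_inv j := Fin.ext <| eq_of_testBit_fin (bitPerm_lt _ _ _) j.isLt fun k => by
    simp [testBit_bitPerm]

/-- `F^{⊗n}` is the incidence matrix of bitwise domination: the `(i, j)` entry is `1` exactly when
the binary support of `j` is contained in that of `i`. -/
theorem Fpow_apply (n : ℕ) (i j : Fin (2 ^ n)) :
    Fpow n i j =
      if ∀ k : Fin n, (j : ℕ).testBit k = true → (i : ℕ).testBit k = true then 1 else 0 := by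
  induction n with
  | zero =>
    have hij : i = j := Fin.ext (by omega)
    subst hij
    rw [if_pos fun k => k.elim0]
    exact Matrix.one_apply_eq i
  | succ n ih =>
    obtain ⟨i, rfl⟩ := (sumEquiv n).surjective i
    obtain ⟨j, rfl⟩ := (sumEquiv n).surjective j
    have hlow : ∀ a : Fin (2 ^ n), (a : ℕ).testBit n = false :=
      fun a => Nat.testBit_lt_two_pow a.isLt
    have hinl : ∀ a : Fin (2 ^ n), (sumEquiv n (Sum.inl a) : ℕ) = a := fun a => by
      simp [sumEquiv]
    have hinr : ∀ a : Fin (2 ^ n), (sumEquiv n (Sum.inr a) : ℕ) = 2 ^ n + a := fun a => by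
      simp [sumEquiv, add_comm]
    have hrest : ∀ (a : Fin (2 ^ n)) (k : Fin n),
        (2 ^ n + (a : ℕ)).testBit k = (a : ℕ).testBit k :=
      fun a k => Nat.testBit_two_pow_add_gt k.isLt _
    rcases i with i | i <;> rcases j with j | j <;>
      simp [Fpow, ih, Fin.forall_fin_succ', hinl, hinr, hlow, hrest, Nat.testBit_two_pow_add_eq]

/-- Domination compares bits position by position, so it is insensitive to reordering positions. -/
theorem Fpow_bitPermEquiv (n : ℕ) (σ : Equiv.Perm (Fin n)) (i j : Fin (2 ^ n)) :
    Fpow n (bitPermEquiv n σ i) (bitPermEquiv n σ j) = Fpow n i j := by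
  simp only [Fpow_apply, bitPermEquiv, Equiv.coe_fn_mk, testBit_bitPerm]
  exact if_congr (σ.forall_congr_left (p := fun k => (j : ℕ).testBit (σ k) = true →
    (i : ℕ).testBit (σ k) = true) |>.trans (by simp)) rfl rfl

theorem permMatrix_apply (n : ℕ) (σ : Equiv.Perm (Fin n)) (i j : Fin (2 ^ n)) :
    permMatrix n σ i j = if i = bitPermEquiv n σ j then 1 else 0 := by
  simp [permMatrix, bitPermEquiv, Fin.ext_iff]

theorem permMatrix_commutes_Fpow (n : ℕ) (σ : Equiv.Perm (Fin n)) :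
    permMatrix n σ * Fpow n = Fpow n * permMatrix n σ := by
  ext i j
  obtain ⟨i, rfl⟩ := (bitPermEquiv n σ).surjective i
  simp [Matrix.mul_apply, permMatrix_apply, Fpow_bitPermEquiv]
end
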